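/- Let d ≥ 2, k ≥ 1 and ℓ : Fin k → ℝ with ℓ i > 0 for all i, and let φ be the work map of the open k-chain. If u ∈ (S^{d-1})^k is aligned with common unit direction w (so u i = w or u i = −w for every i), then the image of the manifold derivative (mfderiv) of φ at u equals the orthogonal complement {x ∈ EuclideanSpace ℝ (Fin d) : ⟪x, w⟫ = 0} of w; in particular this image is a linear subspace of dimension d − 1. -/

import Mathlib

open scoped Manifold BigOperators RealInnerProductSpace
open Metric

/-!
In a product of charts the derivative of `u ↦ ∑ i, f i (u i)` is the sum of the derivatives of the
`f i`, each read through its own coordinate, so its image is the supremum of their images. The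
tangent space of the unit sphere at `u i` is `(ℝ ∙ u i)ᗮ`, hence the image of the derivative of the
work map is the supremum of these hyperplanes over the links of nonzero length. For an aligned
tuple they are all the same hyperplane `(ℝ ∙ w)ᗮ`.
-/

theorem range_sum_comp_proj {R M : Type*} [Semiring R] [AddCommMonoid M] [Module R M]
    {ι : Type*} [Fintype ι] {V : ι → Type*} [∀ i, AddCommMonoid (V i)] [∀ i, Module R (V i)]
    (f : ∀ i, V i →ₗ[R] M) :
    (∑ i, f i ∘ₗ LinearMap.proj i).range = ⨆ i, (f i).range := by
  classical
  have lsum_comp_single (i : ι) : LinearMap.lsum R V ℕ f ∘ₗ LinearMap.single R V i = f i :=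
    LinearMap.ext fun x ↦ LinearMap.lsum_piSingle R V ℕ f i x
  calc (LinearMap.lsum R V ℕ f).range
      = (⨆ i, (⊤ : Submodule R (V i)).map (LinearMap.single R V i)).map
          (LinearMap.lsum R V ℕ f) := by
        rw [Submodule.iSup_map_single, Submodule.pi_top, LinearMap.range_eq_map]
    _ = ⨆ i, (f i).range := by
        simp only [Submodule.map_iSup, ← Submodule.map_comp, lsum_comp_single,
          LinearMap.range_eq_map]

section PiManifold

variable {𝕜 : Type*} [NontriviallyNormedField 𝕜] {ι : Type*} [Fintype ι]
  {E : ι → Type*} [∀ i, NormedAddCommGroup (E i)] [∀ i, NormedSpace 𝕜 (E i)]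
  {H : ι → Type*} [∀ i, TopologicalSpace (H i)] {I : ∀ i, ModelWithCorners 𝕜 (E i) (H i)}
  {M : ι → Type*} [∀ i, TopologicalSpace (M i)] [∀ i, ChartedSpace (H i) (M i)]
  {F : Type*} [NormedAddCommGroup F] [NormedSpace 𝕜 F]

theorem extChartAt_pi (x : ∀ i, M i) :
    extChartAt (ModelWithCorners.pi I) x = PartialEquiv.pi fun i ↦ extChartAt (I i) (x i) := by
  refine PartialEquiv.ext (fun _ ↦ rfl) (fun _ ↦ rfl) ?_
  simp only [extChartAt_source, PartialEquiv.pi_source]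
  rfl

theorem hasMFDerivAt_pi_apply (x : ∀ i, M i) (i : ι) :
    HasMFDerivAt (ModelWithCorners.pi I) (I i) (fun v : ∀ i, M i ↦ v i) x
      (ContinuousLinearMap.proj (R := 𝕜) (φ := fun i ↦ TangentSpace (I i) (x i)) i) := by
  refine ⟨(continuous_apply i).continuousAt, ?_⟩
  refine (ContinuousLinearMap.proj (R := 𝕜) (φ := E) i).hasFDerivWithinAt.congr_of_eventuallyEq
    ?_ ((extChartAt (I i) (x i)).right_inv (mem_extChartAt_target (x i)))
  filter_upwards [extChartAt_target_mem_nhdsWithin (I := ModelWithCorners.pi I) x] with y hy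
  rw [extChartAt_pi] at hy
  exact (extChartAt (I i) (x i)).right_inv (hy i trivial)

theorem hasMFDerivAt_sum_pi {f : ∀ i, M i → F} {x : ∀ i, M i}
    {f' : ∀ i, TangentSpace (I i) (x i) →L[𝕜] F}
    (hf : ∀ i, HasMFDerivAt (I i) 𝓘(𝕜, F) (f i) (x i) (f' i)) :
    HasMFDerivAt (ModelWithCorners.pi I) 𝓘(𝕜, F) (fun v ↦ ∑ i, f i (v i)) x
      (∑ i, f' i ∘L ContinuousLinearMap.proj i) := by
  have hasMFDerivAt_term (i : ι) := (hf i).comp x (hasMFDerivAt_pi_apply x i)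
  exact ⟨tendsto_finsetSum _ fun i _ ↦ (hasMFDerivAt_term i).1,
    .fun_sum fun i _ ↦ (hasMFDerivAt_term i).2⟩

theorem range_mvfderiv_sum_pi {f : ∀ i, M i → F} {x : ∀ i, M i}
    (hf : ∀ i, MDifferentiableAt (I i) 𝓘(𝕜, F) (f i) (x i)) :
    (mvfderiv (ModelWithCorners.pi I) (fun v ↦ ∑ i, f i (v i)) x).range =
      ⨆ i, (mvfderiv (I i) (f i) (x i)).range := by
  have mvfderiv_sum : mvfderiv (ModelWithCorners.pi I) (fun v ↦ ∑ i, f i (v i)) x =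
      ∑ i, mvfderiv (I i) (f i) (x i) ∘L ContinuousLinearMap.proj i :=
    (hasMFDerivAt_sum_pi fun i ↦ (hf i).hasMFDerivAt).mfderiv
  rw [mvfderiv_sum, ContinuousLinearMap.toLinearMap_sum]
  exact range_sum_comp_proj fun i ↦ (mvfderiv (I i) (f i) (x i)).toLinearMap

end PiManifold

section WorkMap

variable {ι : Type*} [Fintype ι] {E : Type*} [NormedAddCommGroup E]

/-- The work map of the open chain with link lengths `ℓ`: it sends the directions of the links to
the position of the end point of the chain. -/
def workMap [NormedSpace ℝ E] (ℓ : ι → ℝ) (u : ι → sphere (0 : E) 1) : E :=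
  ∑ i, ℓ i • (u i : E)

variable [InnerProductSpace ℝ E] {n : ℕ} [Fact (Module.finrank ℝ E = n + 1)]

theorem range_mvfderiv_workMap (ℓ : ι → ℝ) (u : ι → sphere (0 : E) 1) :
    (mvfderiv (ModelWithCorners.pi fun _ : ι ↦ 𝓡 n) (workMap ℓ) u).range =
      ⨆ i, ⨆ _ : ℓ i ≠ 0, (ℝ ∙ (u i : E))ᗮ := by
  have mdifferentiableAt_coe (v : sphere (0 : E) 1) :
      MDifferentiableAt (𝓡 n) 𝓘(ℝ, E) ((↑) : sphere (0 : E) 1 → E) v :=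
    (contMDiff_coe_sphere (m := 1) v).mdifferentiableAt one_ne_zero
  refine (range_mvfderiv_sum_pi fun i ↦ (mdifferentiableAt_coe (u i)).const_smul (ℓ i)).trans ?_
  refine iSup_congr fun i ↦ ?_
  have mvfderiv_smul_coe : mvfderiv (𝓡 n) (ℓ i • ((↑) : sphere (0 : E) 1 → E)) (u i) =
      ℓ i • mvfderiv (𝓡 n) ((↑) : sphere (0 : E) 1 → E) (u i) :=
    ((mdifferentiableAt_coe (u i)).hasMFDerivAt.const_smul (ℓ i)).mfderiv
  rw [mvfderiv_smul_coe, ContinuousLinearMap.toLinearMap_smul, LinearMap.range_smul',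
    range_mvfderiv_subtypeVal]

theorem range_mvfderiv_workMap_of_aligned {ℓ : ι → ℝ} (hℓ : ℓ ≠ 0)
    {u : ι → sphere (0 : E) 1} {w : E} (hu : ∀ i, (u i : E) = w ∨ (u i : E) = -w) :
    (mvfderiv (ModelWithCorners.pi fun _ : ι ↦ 𝓡 n) (workMap ℓ) u).range = (ℝ ∙ w)ᗮ := by
  have span_eq (i : ι) : (ℝ ∙ (u i : E)) = ℝ ∙ w := by
    rcases hu i with h | h
    · rw [h]
    · rw [h, ← Set.neg_singleton, Submodule.span_neg]
  obtain ⟨i, hi⟩ := Function.ne_iff.mp hℓ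
  simp only [range_mvfderiv_workMap, span_eq]
  exact le_antisymm (iSup₂_le fun _ _ ↦ le_rfl) (le_iSup₂_of_le i hi le_rfl)

theorem stmt_2_general {ℓ : ι → ℝ} (hℓ : ℓ ≠ 0)
    {u : ι → sphere (0 : E) 1} {w : E} (hu : ∀ i, (u i : E) = w ∨ (u i : E) = -w) :
    Set.range (mfderiv (ModelWithCorners.pi fun _ : ι ↦ 𝓡 n) 𝓘(ℝ, E) (workMap ℓ) u) =
        {x : E | ⟪x, w⟫ = 0} ∧
      Module.finrank ℝ (LinearMap.range
        (mfderiv (ModelWithCorners.pi fun _ : ι ↦ 𝓡 n) 𝓘(ℝ, E) (workMap ℓ) u).toLinearMap) = n := by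
  have range_eq := range_mvfderiv_workMap_of_aligned (n := n) hℓ hu
  have hw : w ≠ 0 := by
    rintro rfl
    obtain ⟨i, -⟩ := Function.ne_iff.mp hℓ
    exact ne_zero_of_mem_unit_sphere (u i) (by simpa using hu i)
  -- `mfderiv` and `mvfderiv` agree up to the definitional equality of `TangentSpace 𝓘(ℝ, E) _`
  -- with `E`.
  refine ⟨Set.ext fun (x : E) ↦ ?_, ?_⟩
  · exact (SetLike.ext_iff.mp range_eq x).trans Submodule.mem_orthogonal_singleton_iff_inner_left
  · exact (congrArg (fun S : Submodule ℝ E ↦ Module.finrank ℝ S) range_eq).trans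
      (Submodule.finrank_orthogonal_span_singleton hw)

end WorkMap

theorem stmt_2 (d k : ℕ) (hd : 2 ≤ d) (hk : 1 ≤ k)
    [Fact (Module.finrank ℝ (EuclideanSpace ℝ (Fin d)) = (d - 1) + 1)]
    (ℓ : Fin k → ℝ) (hℓ : ∀ i, 0 < ℓ i)
    (u : Fin k → (sphere (0 : EuclideanSpace ℝ (Fin d)) 1))
    (w : EuclideanSpace ℝ (Fin d)) (hw : ‖w‖ = 1)
    (hu : ∀ i, (u i : EuclideanSpace ℝ (Fin d)) = w ∨
      (u i : EuclideanSpace ℝ (Fin d)) = -w) :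
    Set.range
      (mfderiv (ModelWithCorners.pi (fun _ : Fin k => (𝓡 (d - 1))))
        (𝓘(ℝ, EuclideanSpace ℝ (Fin d)))
        (fun v : Fin k → (sphere (0 : EuclideanSpace ℝ (Fin d)) 1) =>
          ∑ i, ℓ i • (v i : EuclideanSpace ℝ (Fin d))) u) =
      {x : EuclideanSpace ℝ (Fin d) | ⟪x, w⟫ = 0} ∧
    Module.finrank ℝ
      (LinearMap.range
        (mfderiv (ModelWithCorners.pi (fun _ : Fin k => (𝓡 (d - 1))))
          (𝓘(ℝ, EuclideanSpace ℝ (Fin d)))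
          (fun v : Fin k → (sphere (0 : EuclideanSpace ℝ (Fin d)) 1) =>
            ∑ i, ℓ i • (v i : EuclideanSpace ℝ (Fin d))) u).toLinearMap) = d - 1 :=
  stmt_2_general (fun h ↦ (hℓ ⟨0, hk⟩).ne' (congrFun h _)) hu
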